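/- Let A = ⟨Q,Σ⟩ be a PFA with |Q| = n and |Σ| = m, and let ℓ > 0. If A has a carefully synchronizing word of length ℓ, then the SAT instance (V,C) encoding (A,ℓ) is satisfiable, i.e., there exists a truth assignment φ : V → {0,1} satisfying every clause in C. -/

import Mathlib

open Set

/-- The extension of the transition function of a PFA (with states `Fin n` and letters
`Fin m`) to subsets of states and words: `δ(S,ε) = S`, `δ(S,va) = ⋃_{q ∈ δ(S,v)} δ(q,a)`. -/
def pfaExt {n m : ℕ} (δ : Fin n → Fin m → Option (Fin n))
    (S : Set (Fin n)) (w : List (Fin m)) : Set (Fin n) :=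
  w.foldl (fun T a => {p | ∃ q ∈ T, δ q a = some p}) S

/-- A nonempty word `w = a₁⋯a_ℓ` is carefully synchronizing for the PFA `δ` if (C1) its
first letter is defined at every state, (C2) for `1 < t ≤ ℓ` the letter `a_t` is defined
at every state of `δ(Q, a₁⋯a_{t-1})`, and (C3) `|δ(Q,w)| = 1`. -/
def CarefulSync {n m : ℕ} (δ : Fin n → Fin m → Option (Fin n)) (w : List (Fin m)) : Prop :=
  w ≠ [] ∧
  (∀ t : Fin w.length, ∀ q ∈ pfaExt δ Set.univ (w.take t.val), (δ q (w.get t)).isSome) ∧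
  (pfaExt δ Set.univ w).ncard = 1

/-- Boolean variables of the SAT instance encoding `(A, ℓ)`: letter variables `x i t`
(`1 ≤ i ≤ m`, `1 ≤ t ≤ ℓ`) and state variables `y j t` (`1 ≤ j ≤ n`, `0 ≤ t ≤ ℓ`). -/
inductive SatVar (n m ℓ : ℕ) : Type where
  | x : Fin m → Fin ℓ → SatVar n m ℓ
  | y : Fin n → Fin (ℓ + 1) → SatVar n m ℓ
deriving DecidableEq

/-- A literal: a variable together with a polarity (`true` = positive, `false` = negated). -/
abbrev SatLit (n m ℓ : ℕ) := SatVar n m ℓ × Bool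

/-- A clause is a disjunction of literals, represented as a list. -/
abbrev SatClause (n m ℓ : ℕ) := List (SatLit n m ℓ)

/-- A truth assignment satisfies a clause if it makes at least one of its literals true. -/
def SatisfiesClause {n m ℓ : ℕ} (φ : SatVar n m ℓ → Bool) (c : SatClause n m ℓ) : Prop :=
  ∃ l ∈ c, φ l.1 = l.2

/-- A truth assignment satisfies a set of clauses if it satisfies every clause in it. -/
def Satisfies {n m ℓ : ℕ} (φ : SatVar n m ℓ → Bool) (C : Set (SatClause n m ℓ)) : Prop :=
  ∀ c ∈ C, SatisfiesClause φ c

/-- The group `I` of initial clauses: the unit clauses `y_{j,0}` for `1 ≤ j ≤ n`. -/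
def clausesI (n m ℓ : ℕ) : Set (SatClause n m ℓ) :=
  {c | ∃ j : Fin n, c = [(SatVar.y j 0, true)]}

/-- The group `L` of letter clauses: for each `t`, the clause `x_{1,t} ∨ ⋯ ∨ x_{m,t}`
and the clauses `¬x_{r,t} ∨ ¬x_{s,t}` for `1 ≤ r < s ≤ m`. -/
def clausesL (n m ℓ : ℕ) : Set (SatClause n m ℓ) :=
  {c | ∃ t : Fin ℓ, c = (List.finRange m).map fun i => ((SatVar.x i t : SatVar n m ℓ), true)} ∪
  {c | ∃ t : Fin ℓ, ∃ r s : Fin m, r < s ∧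
    c = [(SatVar.x r t, false), (SatVar.x s t, false)]}

/-- The group `T` of transition clauses: for each `t` and each pair `(q_j, a_i)`, the
clause `¬y_{j,t-1} ∨ ¬x_{i,t} ∨ y_{k,t}` if `δ(q_j, a_i) = {q_k}`, and the clause
`¬y_{j,t-1} ∨ ¬x_{i,t}` if `δ(q_j, a_i)` is undefined. -/
def clausesT {n m : ℕ} (δ : Fin n → Fin m → Option (Fin n)) (ℓ : ℕ) :
    Set (SatClause n m ℓ) :=
  {c | ∃ (t : Fin ℓ) (j : Fin n) (i : Fin m) (k : Fin n), δ j i = some k ∧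
    c = [(SatVar.y j t.castSucc, false), (SatVar.x i t, false), (SatVar.y k t.succ, true)]} ∪
  {c | ∃ (t : Fin ℓ) (j : Fin n) (i : Fin m), δ j i = none ∧
    c = [(SatVar.y j t.castSucc, false), (SatVar.x i t, false)]}

/-- The group `S` of synchronization clauses: `¬y_{r,ℓ} ∨ ¬y_{s,ℓ}` for `1 ≤ r < s ≤ n`. -/
def clausesS (n m ℓ : ℕ) : Set (SatClause n m ℓ) :=
  {c | ∃ r s : Fin n, r < s ∧
    c = [(SatVar.y r (Fin.last ℓ), false), (SatVar.y s (Fin.last ℓ), false)]}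

/-- The set `C = I ∪ L ∪ T ∪ S` of clauses of the SAT instance encoding `(A, ℓ)`. -/
def encodingClauses {n m : ℕ} (δ : Fin n → Fin m → Option (Fin n)) (ℓ : ℕ) :
    Set (SatClause n m ℓ) :=
  clausesI n m ℓ ∪ clausesL n m ℓ ∪ clausesT δ ℓ ∪ clausesS n m ℓ

/-!
Read the assignment off the run of `w`: at time `t` exactly the letter `a_t` is on, and exactly the
states of `δ(Q, a₁⋯a_t)` are on. The clauses of `T` with a defined transition then hold for any
word; those with an undefined transition are the conditions (C1) and (C2), and `S` is (C3).
-/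

section Satisfaction

variable {n m ℓ : ℕ} {φ : SatVar n m ℓ → Bool}

theorem satisfies_union {C D : Set (SatClause n m ℓ)} :
    Satisfies φ (C ∪ D) ↔ Satisfies φ C ∧ Satisfies φ D :=
  forall₂_or_left

theorem not_satisfiesClause_nil : ¬ SatisfiesClause φ [] := by
  simp [SatisfiesClause]

theorem satisfiesClause_singleton {l : SatLit n m ℓ} :
    SatisfiesClause φ [l] ↔ φ l.1 = l.2 := by
  simp [SatisfiesClause]

theorem satisfiesClause_neg_cons {v : SatVar n m ℓ} {c : SatClause n m ℓ} :
    SatisfiesClause φ ((v, false) :: c) ↔ (φ v = true → SatisfiesClause φ c) := by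
  cases h : φ v <;> simp [SatisfiesClause, h]

theorem satisfiesClause_neg_pair {u v : SatVar n m ℓ} :
    SatisfiesClause φ [(u, false), (v, false)] ↔ ¬(φ u = true ∧ φ v = true) := by
  simp only [satisfiesClause_neg_cons, not_satisfiesClause_nil, not_and, Bool.not_eq_true,
    imp_false]

end Satisfaction

section Run

variable {n m : ℕ} {δ : Fin n → Fin m → Option (Fin n)} {w : List (Fin m)}

theorem pfaExt_nil {S : Set (Fin n)} : pfaExt δ S [] = S :=
  rfl

theorem mem_pfaExt_concat {S : Set (Fin n)} {a : Fin m} {p : Fin n} :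
    p ∈ pfaExt δ S (w ++ [a]) ↔ ∃ q ∈ pfaExt δ S w, δ q a = some p := by
  simp only [pfaExt, List.foldl_append, List.foldl_cons, List.foldl_nil, Set.mem_ofPred_eq]

theorem mem_pfaExt_take_succ {S : Set (Fin n)} {t : Fin w.length} {p : Fin n} :
    p ∈ pfaExt δ S (w.take (t + 1)) ↔ ∃ q ∈ pfaExt δ S (w.take t), δ q (w.get t) = some p := by
  rw [List.take_succ_eq_append_getElem t.isLt, mem_pfaExt_concat, List.get_eq_getElem]

open Classical in
/-- The truth assignment describing the run of the PFA `δ` on the word `w` from the set of all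
states: `x i t` says that `i` is the letter of `w` at position `t` (counted from `0`), and `y j t`
says that `j` is reached from some state by the prefix of `w` of length `t`. -/
noncomputable def runAssignment (δ : Fin n → Fin m → Option (Fin n)) (w : List (Fin m)) :
    SatVar n m w.length → Bool
  | .x i t => decide (w.get t = i)
  | .y j t => decide (j ∈ pfaExt δ Set.univ (w.take t))

theorem runAssignment_x_eq_true_iff {i : Fin m} {t : Fin w.length} :
    runAssignment δ w (.x i t) = true ↔ w.get t = i := by
  simp only [runAssignment, decide_eq_true_eq]

theorem runAssignment_y_eq_true_iff {j : Fin n} {t : Fin (w.length + 1)} :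
    runAssignment δ w (.y j t) = true ↔ j ∈ pfaExt δ Set.univ (w.take t) := by
  simp only [runAssignment, decide_eq_true_eq]

theorem runAssignment_y_last_eq_true_iff {j : Fin n} :
    runAssignment δ w (.y j (Fin.last w.length)) = true ↔ j ∈ pfaExt δ Set.univ w := by
  rw [runAssignment_y_eq_true_iff, Fin.val_last, List.take_length]

theorem satisfies_runAssignment_clausesI :
    Satisfies (runAssignment δ w) (clausesI n m w.length) := by
  rintro _ ⟨j, rfl⟩
  rw [satisfiesClause_singleton, runAssignment_y_eq_true_iff, Fin.val_zero, List.take_zero,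
    pfaExt_nil]
  exact Set.mem_univ j

theorem satisfies_runAssignment_clausesL :
    Satisfies (runAssignment δ w) (clausesL n m w.length) := by
  rintro _ (⟨t, rfl⟩ | ⟨t, r, s, hrs, rfl⟩)
  · exact ⟨(.x (w.get t) t, true), List.mem_map_of_mem (List.mem_finRange _),
      runAssignment_x_eq_true_iff.2 rfl⟩
  · simp only [satisfiesClause_neg_pair, runAssignment_x_eq_true_iff]
    exact fun ⟨hr, hs⟩ => hrs.ne (hr.symm.trans hs)

theorem satisfies_runAssignment_clausesT
    (hdef : ∀ t : Fin w.length, ∀ q ∈ pfaExt δ Set.univ (w.take t), (δ q (w.get t)).isSome) :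
    Satisfies (runAssignment δ w) (clausesT δ w.length) := by
  rintro _ (⟨t, j, i, k, hδ, rfl⟩ | ⟨t, j, i, hδ, rfl⟩)
  · simp only [satisfiesClause_neg_cons, satisfiesClause_singleton, runAssignment_x_eq_true_iff,
      runAssignment_y_eq_true_iff, Fin.val_castSucc, Fin.val_succ]
    rintro hj rfl
    exact mem_pfaExt_take_succ.2 ⟨j, hj, hδ⟩
  · simp only [satisfiesClause_neg_pair, runAssignment_x_eq_true_iff,
      runAssignment_y_eq_true_iff, Fin.val_castSucc]
    rintro ⟨hj, rfl⟩
    exact Option.isSome_iff_ne_none.1 (hdef t j hj) hδ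

theorem satisfies_runAssignment_clausesS (hsync : (pfaExt δ Set.univ w).Subsingleton) :
    Satisfies (runAssignment δ w) (clausesS n m w.length) := by
  rintro _ ⟨r, s, hrs, rfl⟩
  simp only [satisfiesClause_neg_pair, runAssignment_y_last_eq_true_iff]
  exact fun ⟨hr, hs⟩ => hrs.ne (hsync hr hs)

end Run

/-- If the PFA `A` (with `n ≥ 1` states and `m ≥ 1` letters) has a carefully
synchronizing word of length `ℓ > 0`, then the SAT instance encoding `(A, ℓ)` is
satisfiable. -/
theorem csw_imp_sat {n m ℓ : ℕ} (hn : 0 < n) (hm : 0 < m) (hℓ : 0 < ℓ)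
    (δ : Fin n → Fin m → Option (Fin n))
    (w : List (Fin m)) (hlen : w.length = ℓ) (hw : CarefulSync δ w) :
    ∃ φ : SatVar n m ℓ → Bool, Satisfies φ (encodingClauses δ ℓ) := by
  subst hlen
  obtain ⟨-, hdef, hcard⟩ := hw
  have hsync : (pfaExt δ Set.univ w).Subsingleton := Set.ncard_le_one_iff_subsingleton.1 hcard.le
  refine ⟨runAssignment δ w, ?_⟩
  simp only [encodingClauses, satisfies_union]
  exact ⟨⟨⟨satisfies_runAssignment_clausesI, satisfies_runAssignment_clausesL⟩,
    satisfies_runAssignment_clausesT hdef⟩, satisfies_runAssignment_clausesS hsync⟩
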